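/- Let m ∈ ℕ with m ≥ 1, let p be a minimal idempotent ultrafilter on ℕ, let A ∈ ⊗_{i=1}^m p, and let T ∈ 𝒫_f(ℙ). Then there exist functions α : 𝒫_f(ℕ^ℕ) → ℕ and H : 𝒫_f(ℕ^ℕ) → 𝒫_f(ℕ) such that (1) whenever G, K ∈ 𝒫_f(ℕ^ℕ) and G ⊊ K one has max H(G) < min H(K), and (2) whenever G₁ ⊊ G₂ ⊊ ⋯ ⊊ G_n ⊊ ⋯ is an infinite strictly increasing chain in 𝒫_f(ℕ^ℕ), f_i ∈ G_i for each i ∈ ℕ, β₁ < β₂ < ⋯ < β_m are in 𝒫_f(ℕ), and P₁,…,P_m ∈ T, the tuple (Σ_{i∈β₁}α(G_i) + P₁(Σ_{i∈β₁}Σ_{t∈H(G_i)}f_i(t)), …, Σ_{i∈β_m}α(G_i) + P_m(Σ_{i∈β_m}Σ_{t∈H(G_i)}f_i(t))) belongs to A. -/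

import Mathlib

namespace MultiCST

/-- The sum `p + q` of ultrafilters on ℕ: `A ∈ p + q` iff `{x : {y : x+y ∈ A} ∈ q} ∈ p`. -/
def uAdd (p q : Ultrafilter ℕ) : Ultrafilter ℕ :=
  p.bind fun x => q.map fun y => x + y

/-- `A ⊆ ℕ` is a J-set. -/
def IsJSet (A : Set ℕ) : Prop :=
  ∀ F : Finset (ℕ → ℕ), F.Nonempty →
    ∃ (a : ℕ) (β : Finset ℕ), β.Nonempty ∧ ∀ f ∈ F, a + ∑ t ∈ β, f t ∈ A

/-- `p ∈ 𝒥`: every member of `p` is a J-set. -/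
def MemJ (p : Ultrafilter ℕ) : Prop := ∀ A : Set ℕ, A ∈ p → IsJSet A

/-- `p` is an idempotent ultrafilter. -/
def IdempotentUF (p : Ultrafilter ℕ) : Prop := uAdd p p = p

/-- `p` is a minimal idempotent ultrafilter. -/
def IsMinimalIdempotent (p : Ultrafilter ℕ) : Prop :=
  IdempotentUF p ∧
    ∀ q : Ultrafilter ℕ, IdempotentUF q → uAdd q p = q → uAdd p q = q → q = p

/-- Tensor product `⊗_{i=1}^m p_i` of ultrafilters on ℕ, as an ultrafilter on `Fin m → ℕ`. -/
def tensor : ∀ m : ℕ, (Fin m → Ultrafilter ℕ) → Ultrafilter (Fin m → ℕ)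
  | 0, _ => pure fun i => i.elim0
  | m + 1, p =>
      (p 0).bind fun x => (tensor m fun i => p i.succ).map fun v => Fin.cons x v

/-- `f : ℕ → ℕ` is (given by) a polynomial with coefficients in ℕ and zero constant term. -/
def IsPolyZeroConst (f : ℕ → ℕ) : Prop :=
  ∃ P : Polynomial ℕ, P.coeff 0 = 0 ∧ ∀ x, f x = P.eval x

/-- The linear combination `a₁·p₁ + a₂·p₂ + ⋯ + a_m·p_m` of ultrafilters on ℕ. -/
def linComb : ∀ m : ℕ, (Fin m → ℕ) → (Fin m → Ultrafilter ℕ) → Ultrafilter ℕ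
  | 0, _, _ => pure 0
  | m + 1, a, p =>
      uAdd ((p 0).map fun x => a 0 * x)
        (linComb m (fun i => a i.succ) fun i => p i.succ)



section PET
variable {V : Type} [AddCommMonoid V]

/-- Polynomial maps of degree at most `d` vanishing at zero. -/
def PolyLE : ℕ → (V → ℤ) → Prop
  | 0, R => ∀ x, R x = 0
  | d + 1, R => ∀ v, PolyLE d fun x => R (v + x) - R v - R x

lemma PolyLE.add : ∀ {d : ℕ} {R S : V → ℤ}, PolyLE d R → PolyLE d S →
    PolyLE d (fun x => R x + S x)
  | 0, R, S, h, k => fun x => by simp [h x, k x]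
  | d + 1, R, S, h, k => fun v => by
      have := PolyLE.add (h v) (k v)
      convert this using 2
      ring

lemma PolyLE.neg : ∀ {d : ℕ} {R : V → ℤ}, PolyLE d R → PolyLE d (fun x => - R x)
  | 0, R, h => fun x => by simp [h x]
  | d + 1, R, h => fun v => by
      have := PolyLE.neg (h v)
      convert this using 2
      ring

lemma PolyLE.sub {d : ℕ} {R S : V → ℤ} (h : PolyLE d R) (k : PolyLE d S) :
    PolyLE d (fun x => R x - S x) := by
  have := h.add k.neg
  convert this using 2
  ring

lemma PolyLE.succ : ∀ {d : ℕ} {R : V → ℤ}, PolyLE d R → PolyLE (d + 1) R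
  | 0, R, h => fun v x => by
      have h' : ∀ x, R x = 0 := h
      simp [h']
  | d + 1, R, h => fun v => PolyLE.succ (h v)

lemma PolyLE.mono {d e : ℕ} (hde : d ≤ e) {R : V → ℤ} (h : PolyLE d R) : PolyLE e R := by
  induction hde with
  | refl => exact h
  | step _ ih => exact ih.succ

lemma PolyLE.const : ∀ {d : ℕ} {k : ℤ}, PolyLE d (fun _ : V => k) → k = 0
  | 0, k, h => h 0
  | d + 1, k, h => by
      have := PolyLE.const (h 0)
      linarith

lemma PolyLE.map_zero {d : ℕ} {R : V → ℤ} (h : PolyLE d R) : R 0 = 0 := by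
  have h1 := h.succ 0
  have : PolyLE d (fun _ : V => - R 0) := by
    convert h1 using 2
    simp
  have := this.const
  linarith

/-- Finitary van der Waerden property of a family of polynomial maps along an IP system. -/
def VdW (x : ℕ → V) (Rs : Finset (V → ℤ)) : Prop :=
  ∀ (κ : Type) [Finite κ] (n : ℕ), ∃ (W : Finset ℤ) (Hs : Finset (Finset ℕ)),
    (∀ H ∈ Hs, H.Nonempty ∧ ∀ t ∈ H, n ≤ t) ∧
    ∀ c : ℤ → κ, ∃ a ∈ W, ∃ H ∈ Hs, ∀ R ∈ Rs, c (a + R (∑ t ∈ H, x t)) = c a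

open Classical in
/-- The derived family. -/
noncomputable def derived (x : ℕ → V) (Rs : Finset (V → ℤ)) (g : V → ℤ)
    (Hs : Finset (Finset ℕ)) : Finset (V → ℤ) :=
  (Rs ×ˢ insert ∅ Hs).image fun q => fun v =>
    q.1 (∑ t ∈ q.2, x t + v) - q.1 (∑ t ∈ q.2, x t) - g v

open Classical in
lemma vdw_step (x : ℕ → V) (Rs : Finset (V → ℤ)) (g : V → ℤ) (h0 : ∀ R ∈ Rs, R 0 = 0)
    (ih : ∀ Hs, VdW x (derived x Rs g Hs)) : VdW x Rs := by
  intro κ _ n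
  have := Fintype.ofFinite κ
  have focus : ∀ j : ℕ, ∃ (W : Finset ℤ) (Hs : Finset (Finset ℕ)),
      (∀ H ∈ Hs, H.Nonempty ∧ ∀ t ∈ H, n ≤ t) ∧
      ∀ c : ℤ → κ, (∃ a ∈ W, ∃ H ∈ Hs, ∀ R ∈ Rs, c (a + R (∑ t ∈ H, x t)) = c a) ∨
        ∃ a ∈ W, ∃ C : Finset κ, C.card = j ∧
          ∀ k ∈ C, ∃ H ∈ Hs, ∀ R ∈ Rs, c (a + R (∑ t ∈ H, x t)) = k := by
    intro j
    induction j with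
    | zero => exact ⟨{0}, ∅, by simp, fun c => Or.inr ⟨0, by simp, ∅, by simp, by simp⟩⟩
    | succ j hj =>
      obtain ⟨W, Hs, hHs, hW⟩ := hj
      obtain ⟨N, hnN, hN⟩ : ∃ N, n ≤ N ∧ ∀ H ∈ Hs, ∀ t ∈ H, t < N := by
        refine ⟨n + (Hs.biUnion id).sup id + 1, by omega, fun H hH t ht => ?_⟩
        have : t ≤ (Hs.biUnion id).sup id :=
          Finset.le_sup (f := id) (Finset.mem_biUnion.2 ⟨H, hH, ht⟩)
        omega
      set Wb : Finset ℤ := W ∪ (W ×ˢ Rs ×ˢ Hs).image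
        (fun q => q.1 + q.2.1 (∑ t ∈ q.2.2, x t)) with hWb
      obtain ⟨W', Hs', hHs', hW'⟩ := ih Hs (Wb → κ) N
      refine ⟨(W' ×ˢ W).image (fun q => q.1 + q.2) ∪
          (W' ×ˢ W ×ˢ Hs').image (fun q => q.1 + q.2.1 - g (∑ t ∈ q.2.2, x t)),
        Hs ∪ Hs' ∪ (Hs ×ˢ Hs').image (fun q => q.1 ∪ q.2), ?_, ?_⟩
      · intro H hH
        simp only [Finset.mem_union, Finset.mem_image, Finset.mem_product] at hH
        rcases hH with (hH | hH) | ⟨⟨H1, H2⟩, ⟨h1, h2⟩, rfl⟩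
        · exact hHs H hH
        · exact ⟨(hHs' H hH).1, fun t ht => hnN.trans ((hHs' H hH).2 t ht)⟩
        · refine ⟨(hHs H1 h1).1.mono Finset.subset_union_left, fun t ht => ?_⟩
          rcases Finset.mem_union.1 ht with ht | ht
          · exact (hHs H1 h1).2 t ht
          · exact hnN.trans ((hHs' H2 h2).2 t ht)
      · intro c
        obtain ⟨a', ha', H, hH, hmono⟩ := hW' (fun a w => c (a + w))
        have hmono' : ∀ w ∈ Wb, ∀ R ∈ Rs, ∀ K ∈ insert ∅ Hs,
            c (a' + (R (∑ t ∈ K, x t + ∑ t ∈ H, x t) - R (∑ t ∈ K, x t) - g (∑ t ∈ H, x t)) + w)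
              = c (a' + w) := by
          intro w hw R hR K hK
          have := hmono (fun v => R (∑ t ∈ K, x t + v) - R (∑ t ∈ K, x t) - g v)
            (Finset.mem_image.2 ⟨(R, K), Finset.mem_product.2 ⟨hR, hK⟩, rfl⟩)
          exact congrFun this ⟨w, hw⟩
        rcases hW (fun z => c (a' + z)) with ⟨w, hw, K, hK, hs⟩ | ⟨w, hw, C, hC, hs⟩
        · left
          refine ⟨a' + w, ?_, K, ?_, fun R hR => ?_⟩
          · exact Finset.mem_union_left _ (Finset.mem_image.2 ⟨(a', w), by simp [ha', hw], rfl⟩)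
          · simp [hK]
          · rw [add_assoc]; exact hs R hR
        · by_cases hc : c (a' + w) ∈ C
          · left
            obtain ⟨K, hK, hs'⟩ := hs _ hc
            refine ⟨a' + w, ?_, K, ?_, fun R hR => ?_⟩
            · exact Finset.mem_union_left _ (Finset.mem_image.2 ⟨(a', w), by simp [ha', hw], rfl⟩)
            · simp [hK]
            · rw [add_assoc]; exact hs' R hR
          · right
            refine ⟨a' + w - g (∑ t ∈ H, x t), ?_, insert (c (a' + w)) C, ?_, ?_⟩
            · exact Finset.mem_union_right _
                (Finset.mem_image.2 ⟨(a', w, H), by simp [ha', hw, hH], rfl⟩)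
            · rw [Finset.card_insert_of_notMem hc, hC]
            · intro k hk
              rcases Finset.mem_insert.1 hk with rfl | hk
              · refine ⟨H, by simp [hH], fun R hR => ?_⟩
                rw [← hmono' w (by simp [hWb, hw]) R hR ∅ (by simp)]
                congr 1
                simp [h0 R hR]
                ring
              · obtain ⟨K, hK, hs'⟩ := hs k hk
                refine ⟨K ∪ H, ?_, fun R hR => ?_⟩
                · exact Finset.mem_union_right _
                    (Finset.mem_image.2 ⟨(K, H), by simp [hK, hH], rfl⟩)
                · have hdis : Disjoint K H := by
                    rw [Finset.disjoint_left]
                    intro t ht ht'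
                    have h1 := hN K hK t ht
                    have h2 := (hHs' H hH).2 t ht'
                    omega
                  rw [Finset.sum_union hdis, ← hs' R hR]
                  have := hmono' (w + R (∑ t ∈ K, x t)) (Finset.mem_union_right _
                    (Finset.mem_image.2 ⟨(w, R, K), by simp [hw, hR, hK], rfl⟩)) R hR K
                    (by simp [hK])
                  rw [← this]
                  congr 1
                  ring
  obtain ⟨W, Hs, hHs, hW⟩ := focus (Fintype.card κ + 1)
  refine ⟨W, Hs, hHs, fun c => ?_⟩
  rcases hW c with h | ⟨a, -, C, hC, -⟩
  · exact h
  · have := Finset.card_le_univ C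
    omega

/-- `M` covers `Rs`. -/
def Covers (M : Multiset (ℕ × (V → ℤ))) (Rs : Finset (V → ℤ)) : Prop :=
  (∀ q ∈ M, PolyLE (q.1 + 1) q.2) ∧
  ∀ R ∈ Rs, (∀ v, R v = 0) ∨ ∃ q ∈ M, PolyLE q.1 fun v => R v - q.2 v

lemma vdw_of_nonzero (x : ℕ → V) (Rs Rs' : Finset (V → ℤ))
    (h : ∀ R ∈ Rs, (∀ v, R v = 0) ∨ R ∈ Rs') (h' : VdW x Rs') : VdW x Rs := by
  intro κ _ n
  obtain ⟨W, Hs, hHs, hW⟩ := h' κ n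
  refine ⟨W, Hs, hHs, fun c => ?_⟩
  obtain ⟨a, ha, H, hH, hs⟩ := hW c
  refine ⟨a, ha, H, hH, fun R hR => ?_⟩
  rcases h R hR with h0 | h1
  · simp [h0]
  · exact hs R h1

lemma exists_min_fst {X : Type} (M : Multiset (ℕ × X)) (hM : M ≠ 0) :
    ∃ q ∈ M, ∀ q' ∈ M, q.1 ≤ q'.1 := by
  classical
  obtain ⟨a, ha⟩ := Multiset.exists_mem_of_ne_zero hM
  obtain ⟨q, hq, h⟩ := M.toFinset.exists_min_image Prod.fst ⟨a, by simpa using ha⟩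
  exact ⟨q, by simpa using hq, fun q' hq' => h q' (by simpa using hq')⟩

open Classical in
theorem vdw_of_covers (x : ℕ → V) : ∀ (N : Multiset ℕ) (M : Multiset (ℕ × (V → ℤ)))
    (Rs : Finset (V → ℤ)), M.map Prod.fst = N → Covers M Rs → VdW x Rs := by
  intro N
  induction N using (wellFounded_lt (α := ℕ)).cutExpand.induction with
  | _ N ih =>
  intro M Rs hMN ⟨hM, hcov⟩
  by_cases hM0 : M = 0
  · subst hM0
    refine vdw_of_nonzero x Rs ∅ (fun R hR => ?_) ?_
    · rcases hcov R hR with h | ⟨q, hq, -⟩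
      · exact Or.inl h
      · simp at hq
    · intro κ _ n
      exact ⟨{0}, {{n}}, by simp, fun c => ⟨0, by simp, {n}, by simp, by simp⟩⟩
  obtain ⟨⟨e, g⟩, hq, hmin⟩ := exists_min_fst M hM0
  obtain ⟨M', rfl⟩ := Multiset.exists_cons_of_mem hq
  have hg : PolyLE (e + 1) g := hM (e, g) (by simp)
  refine vdw_of_nonzero x Rs (Rs.filter fun R => ¬ ∀ v, R v = 0)
    (fun R hR => by
      by_cases h : ∀ v, R v = 0
      · exact Or.inl h
      · exact Or.inr (Finset.mem_filter.2 ⟨hR, h⟩)) ?_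
  set Rs' := Rs.filter fun R => ¬ ∀ v, R v = 0 with hRs'
  have hcov' : ∀ R ∈ Rs', ∃ q ∈ (e, g) ::ₘ M', PolyLE (q.1 + 1) q.2 ∧
      PolyLE q.1 fun v => R v - q.2 v := by
    intro R hR
    rw [hRs', Finset.mem_filter] at hR
    obtain ⟨q, hq, h⟩ := (hcov R hR.1).resolve_left hR.2
    exact ⟨q, hq, hM q hq, h⟩
  have hpoly : ∀ q : ℕ × (V → ℤ), PolyLE (q.1 + 1) q.2 → ∀ R : V → ℤ,
      PolyLE q.1 (fun v => R v - q.2 v) → PolyLE (q.1 + 1) R := by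
    intro q h1 R h2
    have := h1.add h2.succ
    convert this using 2
    ring
  refine vdw_step x Rs' g ?_ ?_
  · intro R hR
    obtain ⟨q, -, h1, h2⟩ := hcov' R hR
    exact (hpoly q h1 R h2).map_zero
  intro Hs
  -- the new low degree representatives
  set D := (derived x Rs' g Hs).filter fun R => PolyLE e R with hD
  set t : Multiset (ℕ × (V → ℤ)) :=
    if e = 0 then 0 else D.val.map fun R => (e - 1, R) with ht
  set M1 : Multiset (ℕ × (V → ℤ)) := M'.map (fun q => (q.1, fun v => q.2 v - g v)) + t with hM1
  refine ih (M1.map Prod.fst) ?_ M1 _ rfl ⟨?_, ?_⟩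
  · refine ⟨t.map Prod.fst, e, ?_, ?_⟩
    · intro a' ha'
      rw [ht] at ha'
      split_ifs at ha' with he
      · simp at ha'
      · obtain ⟨q, hq, rfl⟩ := Multiset.mem_map.1 ha'
        obtain ⟨R, -, rfl⟩ := Multiset.mem_map.1 hq
        simp only
        omega
    · rw [← hMN, hM1]
      simp only [Multiset.map_add, Multiset.map_map, Multiset.map_cons, Function.comp_def]
      rw [← Multiset.singleton_add]
      abel
  · intro q hq
    rw [hM1, Multiset.mem_add] at hq
    rcases hq with hq | hq
    · obtain ⟨q0, hq0, rfl⟩ := Multiset.mem_map.1 hq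
      have h1 := hM q0 (by simp [hq0])
      have h2 := hmin q0 (by simp [hq0])
      exact h1.sub (hg.mono (by simpa using h2))
    · rw [ht] at hq
      split_ifs at hq with he
      · simp at hq
      · obtain ⟨R, hR, rfl⟩ := Multiset.mem_map.1 hq
        have : PolyLE e R := (Finset.mem_filter.1 hR).2
        simpa [Nat.sub_add_cancel (Nat.one_le_iff_ne_zero.2 he)] using this
  · intro R' hR'
    obtain ⟨⟨R, K⟩, hRK, hR'e⟩ := Finset.mem_image.1 hR'
    have hR : R ∈ Rs' := (Finset.mem_product.1 hRK).1
    obtain ⟨q, hq, h1, h2⟩ := hcov' R hR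
    have h3 := hpoly q h1 R h2 (∑ t ∈ K, x t)
    have h4 := h2.add h3
    rcases Multiset.mem_cons.1 hq with rfl | hq
    · have h5 : PolyLE e R' := by
        rw [← hR'e]
        convert h4 using 2
        simp only
        ring
      by_cases he : e = 0
      · left
        subst he
        exact h5
      · right
        refine ⟨(e - 1, R'), ?_, ?_⟩
        · rw [hM1, Multiset.mem_add]
          right
          rw [ht, if_neg he]
          exact Multiset.mem_map.2 ⟨R', Finset.mem_filter.2 ⟨hR', h5⟩, rfl⟩
        · simp only [sub_self]
          have : ∀ d, PolyLE d (fun _ : V => (0 : ℤ)) := fun d =>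
            PolyLE.mono (Nat.zero_le d) (fun _ => rfl)
          exact this _
    · right
      refine ⟨(q.1, fun v => q.2 v - g v), ?_, ?_⟩
      · rw [hM1, Multiset.mem_add]
        left
        exact Multiset.mem_map.2 ⟨q, hq, rfl⟩
      · rw [← hR'e]
        convert h4 using 2
        simp only
        ring

theorem vdw_of_poly (x : ℕ → V) (Rs : Finset (V → ℤ)) (h : ∀ R ∈ Rs, ∃ d, PolyLE d R) :
    VdW x Rs := by
  classical
  choose! d hd using h
  refine vdw_of_covers x _ (Rs.val.map fun R => (d R, R)) Rs rfl ⟨?_, ?_⟩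
  · intro q hq
    obtain ⟨R, hR, rfl⟩ := Multiset.mem_map.1 hq
    exact (hd R hR).succ
  · intro R hR
    refine Or.inr ⟨(d R, R), Multiset.mem_map.2 ⟨R, hR, rfl⟩, ?_⟩
    simp only [sub_self]
    exact PolyLE.mono (Nat.zero_le _) (fun _ => rfl)

end PET

open Polynomial in
lemma polyLE_eval {V : Type} [AddCommMonoid V] (φ : V →+ ℤ) : ∀ (d : ℕ) (P : ℤ[X]),
    P.natDegree ≤ d → PolyLE d (fun v => P.eval (φ v) - P.eval 0)
  | 0, P, h => fun v => by
      rw [Polynomial.eq_C_of_natDegree_le_zero h]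
      simp
  | d + 1, P, h => fun v => by
      have hdeg : (taylor (φ v) P - P).natDegree ≤ d := by
        by_cases hP : P = 0
        · simp [hP]
        by_cases h0 : taylor (φ v) P - P = 0
        · simp [h0]
        have := degree_sub_lt_left (p := taylor (φ v) P) (q := P) (degree_taylor _ _)
          (by simpa using hP) (leadingCoeff_taylor _ _)
        rw [degree_taylor] at this
        have := natDegree_lt_natDegree h0 this
        omega
      have := polyLE_eval φ d _ hdeg
      convert this using 2
      simp only [eval_sub, taylor_eval, map_add, zero_add]
      rw [add_comm (φ v)]
      ring

/-- Polynomial IP van der Waerden theorem, colouring form. -/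
theorem poly_ip_vdw (κ : Type) [Finite κ] (χ : ℕ → κ) (T F : Finset (ℕ → ℕ))
    (hT : ∀ P ∈ T, IsPolyZeroConst P) (n : ℕ) :
    ∃ (a : ℕ) (H : Finset ℕ), H.Nonempty ∧ (∀ t ∈ H, n ≤ t) ∧
      ∀ P ∈ T, ∀ f ∈ F, χ (a + P (∑ t ∈ H, f t)) = χ a := by
  classical
  set R1 : Finset (((ℕ → ℕ) → ℕ) → ℤ) := (T ×ˢ F).image fun q => fun v => (q.1 (v q.2) : ℤ)
  set R2 : Finset (((ℕ → ℕ) → ℕ) → ℤ) := (T ×ˢ F).image fun q => fun v => - (q.1 (v q.2) : ℤ)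
  have hp : ∀ P ∈ T, ∀ f : ℕ → ℕ, ∃ d,
      PolyLE d (fun v : (ℕ → ℕ) → ℕ => (P (v f) : ℤ)) := by
    intro P hP f
    obtain ⟨Q, hQ0, hQ⟩ := hT P hP
    refine ⟨(Q.map (Nat.castRingHom ℤ)).natDegree, ?_⟩
    have := polyLE_eval ((Nat.castAddMonoidHom ℤ).comp (Pi.evalAddMonoidHom (fun _ => ℕ) f)) _
      (Q.map (Nat.castRingHom ℤ)) le_rfl
    convert this using 2 with v
    have h0 : Q.eval 0 = 0 := by rw [← Polynomial.coeff_zero_eq_eval_zero, hQ0]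
    have h1 := Polynomial.eval_natCast_map (Nat.castRingHom ℤ) Q 0
    have h2 := Polynomial.eval_natCast_map (Nat.castRingHom ℤ) Q (v f)
    simp only [Nat.cast_zero, h0, map_zero] at h1
    simp [h1, hQ]
  have hv := vdw_of_poly (fun t => fun f : ℕ → ℕ => f t) (R1 ∪ R2) (by
    intro R hR
    rcases Finset.mem_union.1 hR with hR | hR
    · obtain ⟨⟨P, f⟩, h, rfl⟩ := Finset.mem_image.1 hR
      exact hp P (Finset.mem_product.1 h).1 f
    · obtain ⟨⟨P, f⟩, h, rfl⟩ := Finset.mem_image.1 hR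
      obtain ⟨d, hd⟩ := hp P (Finset.mem_product.1 h).1 f
      exact ⟨d, hd.neg⟩)
  obtain ⟨W, Hs, hHs, hW⟩ := hv (Prop × κ) n
  obtain ⟨a, -, H, hH, hc⟩ := hW (fun z => (0 ≤ z, χ z.natAbs))
  refine ⟨a.natAbs, H, (hHs H hH).1, (hHs H hH).2, fun P hP f hf => ?_⟩
  have h1 := hc (fun v => (P (v f) : ℤ)) (Finset.mem_union_left _
    (Finset.mem_image.2 ⟨(P, f), by simp [hP, hf], rfl⟩))
  have h2 := hc (fun v => -(P (v f) : ℤ)) (Finset.mem_union_right _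
    (Finset.mem_image.2 ⟨(P, f), by simp [hP, hf], rfl⟩))
  simp only [Finset.sum_apply, Prod.mk.injEq] at h1 h2
  set s := P (∑ t ∈ H, f t)
  by_cases ha : 0 ≤ a
  · rw [← h1.2]
    congr 1
    omega
  · rw [← h2.2]
    congr 1
    omega

section UF
attribute [local instance] Ultrafilter.addSemigroup

lemma uAdd_eq (p q : Ultrafilter ℕ) : uAdd p q = p + q := by
  apply Ultrafilter.coe_inj.mp
  apply Filter.ext'
  intro P
  exact Iff.rfl

lemma syndetic_of_minimal (p : Ultrafilter ℕ) (hp : IsMinimalIdempotent p) (A : Set ℕ)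
    (hA : A ∈ p) : ∃ E : Finset ℕ, ∀ x : ℕ, ∃ t ∈ E, ∀ᶠ y in p, t + x + y ∈ A := by
  by_contra hcon
  push Not at hcon
  obtain ⟨hidem, hmin⟩ := hp
  simp only [IdempotentUF, uAdd_eq] at hidem hmin
  let B : ℕ → Set ℕ := fun t => {x | ¬ ∀ᶠ y in p, t + x + y ∈ A}
  let l : Filter ℕ := ⨅ E : Finset ℕ, Filter.principal (⋂ t ∈ E, B t)
  have hl : l.NeBot := by
    apply Filter.iInf_neBot_of_directed
    · intro E1 E2
      refine ⟨E1 ∪ E2, ?_, ?_⟩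
      · exact Filter.principal_mono.2 (Set.biInter_subset_biInter_left (by
          intro t ht; exact Finset.mem_union_left _ ht))
      · exact Filter.principal_mono.2 (Set.biInter_subset_biInter_left (by
          intro t ht; exact Finset.mem_union_right _ ht))
    · intro E
      rw [Filter.principal_neBot_iff]
      obtain ⟨x, hx⟩ := hcon E
      exact ⟨x, by simpa [B] using hx⟩
  let q : Ultrafilter ℕ := Ultrafilter.of l
  have hq : ∀ t, B t ∈ q := by
    intro t
    have h1 : (q : Filter ℕ) ≤ Filter.principal (⋂ t' ∈ ({t} : Finset ℕ), B t') :=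
      (Ultrafilter.of_le l).trans (iInf_le _ _)
    have := Filter.le_principal_iff.1 h1
    simpa using this
  obtain ⟨e, ⟨r, rfl⟩, he⟩ := exists_idempotent_in_compact_add_subsemigroup
    (M := Ultrafilter ℕ) Ultrafilter.continuous_add_left
    (Set.range (fun r : Ultrafilter ℕ => r + (q + p))) (Set.range_nonempty _)
    (isCompact_range (Ultrafilter.continuous_add_left _)) (by
      rintro _ ⟨a, rfl⟩ _ ⟨b, rfl⟩
      exact ⟨a + (q + p) + b, by simp only [add_assoc]⟩)
  set e := r + (q + p) with hedef
  have hep : e + p = e := by rw [hedef, add_assoc, add_assoc, hidem]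
  have hpe : p + e = p := by
    apply hmin
    · calc p + e + (p + e) = p + ((e + p) + e) := by simp only [add_assoc]
        _ = p + e := by rw [hep, he]
    · rw [add_assoc, hep]
    · rw [← add_assoc, hidem]
  have hA' : ∀ᶠ a in ((p + r + (q + p) : Ultrafilter ℕ) : Filter ℕ), a ∈ A := by
    rw [add_assoc, ← hedef, hpe]
    exact hA
  rw [Ultrafilter.eventually_add] at hA'
  obtain ⟨t, ht⟩ := hA'.exists
  rw [Ultrafilter.eventually_add (U := q) (V := p) (p := fun z => t + z ∈ A)] at ht
  obtain ⟨x, hx, hx'⟩ := (ht.and (hq t)).exists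
  apply hx'
  simpa only [add_assoc] using hx

end UF

/-- One step: members of minimal idempotents contain polynomial IP configurations. -/
theorem one_step (p : Ultrafilter ℕ) (hp : IsMinimalIdempotent p) (A : Set ℕ) (hA : A ∈ p)
    (T F : Finset (ℕ → ℕ)) (hT : ∀ P ∈ T, IsPolyZeroConst P) (n : ℕ) :
    ∃ (a : ℕ) (H : Finset ℕ), H.Nonempty ∧ (∀ t ∈ H, n ≤ t) ∧
      ∀ P ∈ T, ∀ f ∈ F, a + P (∑ t ∈ H, f t) ∈ A := by
  obtain ⟨E, hE⟩ := syndetic_of_minimal p hp A hA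
  choose τ hτE hτ using hE
  obtain ⟨a, H, hH, hn, hc⟩ := poly_ip_vdw E (fun x => ⟨τ x, hτE x⟩) T F hT n
  have hev : ∀ᶠ y in p, ∀ P ∈ T, ∀ f ∈ F, τ a + (a + P (∑ t ∈ H, f t)) + y ∈ A := by
    rw [Filter.eventually_all_finset]
    intro P hP
    rw [Filter.eventually_all_finset]
    intro f hf
    have := congrArg Subtype.val (hc P hP f hf)
    simp only at this
    rw [← this]
    exact hτ _
  obtain ⟨y, hy⟩ := hev.exists
  refine ⟨τ a + a + y, H, hH, hn, fun P hP f hf => ?_⟩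
  have := hy P hP f hf
  convert this using 1
  ring

/-! ### Tensor products and lists -/

/-- `Pref p m A L`: the section of `A` at the prefix `L` is large. -/
def Pref (p : Ultrafilter ℕ) : ∀ m : ℕ, Set (Fin m → ℕ) → List ℕ → Prop
  | m, A, [] => A ∈ tensor m fun _ => p
  | 0, _, _ :: _ => True
  | m + 1, A, x :: L => Pref p m {v | (Fin.cons x v : Fin (m + 1) → ℕ) ∈ A} L

lemma Pref.push (p : Ultrafilter ℕ) : ∀ (m : ℕ) (A : Set (Fin m → ℕ)) (L : List ℕ),
    Pref p m A L → ∀ᶠ x in p, Pref p m A (L ++ [x])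
  | 0, A, [], _ => Filter.Eventually.of_forall fun x => by simp [Pref]
  | m + 1, A, [], h => by
      have h' : A ∈ tensor (m + 1) fun _ => p := by simpa [Pref] using h
      have h2 : ∀ᶠ x in p, {v | (Fin.cons x v : Fin (m + 1) → ℕ) ∈ A} ∈ tensor m fun _ => p := h'
      filter_upwards [h2] with x hx
      simpa [Pref] using hx
  | 0, A, y :: L, _ => Filter.Eventually.of_forall fun x => by simp [Pref]
  | m + 1, A, y :: L, h => by
      have h' : Pref p m {v | (Fin.cons y v : Fin (m + 1) → ℕ) ∈ A} L := by
        simpa [Pref] using h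
      filter_upwards [Pref.push p m _ L h'] with x hx
      simpa [Pref] using hx

lemma Pref.ofFn (p : Ultrafilter ℕ) : ∀ (m : ℕ) (A : Set (Fin m → ℕ)) (v : Fin m → ℕ),
    Pref p m A (List.ofFn v) → v ∈ A
  | 0, A, v, h => by
      have h' : A ∈ tensor 0 fun _ => p := by simpa [Pref] using h
      have h2 : (fun i : Fin 0 => (i.elim0 : ℕ)) ∈ A := h'
      convert h2
  | m + 1, A, v, h => by
      rw [List.ofFn_succ] at h
      have h' := Pref.ofFn p m _ _ (by simpa only [Pref] using h)
      have : (Fin.cons (v 0) (fun i : Fin m => v i.succ) : Fin (m + 1) → ℕ) = v :=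
        Fin.cons_self_tail v
      rw [← this]
      exact h'

/-- Star version of a predicate on (reversed) prefixes. -/
def Star (p : Ultrafilter ℕ) (Q : List ℕ → Prop) : List ℕ → Prop
  | [] => Q []
  | x :: L => Q (x :: L) ∧ ∀ᶠ y in p, Q ((x + y) :: L)

lemma Star.base {p : Ultrafilter ℕ} {Q : List ℕ → Prop} {L : List ℕ} (h : Star p Q L) : Q L := by
  cases L with
  | nil => exact h
  | cons x L => exact h.1

lemma idem_eventually {p : Ultrafilter ℕ} (hp : IdempotentUF p) {D : ℕ → Prop}
    (h : ∀ᶠ x in p, D x) : ∀ᶠ x in p, ∀ᶠ y in p, D (x + y) := by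
  have h1 : ∀ᶠ x in (uAdd p p : Ultrafilter ℕ), D x := by
    rw [show uAdd p p = p from hp]
    exact h
  exact h1

lemma Star.push {p : Ultrafilter ℕ} (hp : IdempotentUF p) {Q : List ℕ → Prop}
    (hQ : ∀ L, Q L → ∀ᶠ x in p, Q (x :: L)) {L : List ℕ} (h : Star p Q L) :
    ∀ᶠ x in p, Star p Q (x :: L) := by
  have h1 := hQ L h.base
  filter_upwards [h1, idem_eventually hp h1] with x hx hx'
  exact ⟨hx, hx'⟩

lemma Star.extend {p : Ultrafilter ℕ} (hp : IdempotentUF p) {Q : List ℕ → Prop}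
    {x : ℕ} {L : List ℕ} (h : Star p Q (x :: L)) :
    ∀ᶠ y in p, Star p Q ((x + y) :: L) := by
  filter_upwards [h.2, idem_eventually hp h.2] with y hy hy'
  exact ⟨hy, by simpa only [add_assoc] using hy'⟩

lemma IsPolyZeroConst.shift {P : ℕ → ℕ} (hP : IsPolyZeroConst P) (x : ℕ) :
    ∃ P' : ℕ → ℕ, IsPolyZeroConst P' ∧ ∀ y, P (x + y) = P x + P' y := by
  obtain ⟨Q, -, hQ⟩ := hP
  refine ⟨fun y => (Q.comp (Polynomial.X + Polynomial.C x)).divX.eval y * y,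
    ⟨(Q.comp (Polynomial.X + Polynomial.C x)).divX * Polynomial.X, by simp, by simp⟩, ?_⟩
  intro y
  have h := congrArg (Polynomial.eval y)
    (Polynomial.divX_mul_X_add (Q.comp (Polynomial.X + Polynomial.C x)))
  have h0 : (Q.comp (Polynomial.X + Polynomial.C x)).coeff 0 = P x := by
    rw [Polynomial.coeff_zero_eq_eval_zero, hQ]
    simp
  rw [h0] at h
  simp only [Polynomial.eval_add, Polynomial.eval_mul, Polynomial.eval_X, Polynomial.eval_C,
    Polynomial.eval_comp] at h
  simp only [hQ] at h ⊢
  rw [add_comm x y, ← h]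
  ring

/-- States: lists of blocks (most recent first). -/
abbrev St := List (ℕ × ℕ × (ℕ → ℕ))

/-- Values of the blocks. -/
def St.val (s : St) : List ℕ := s.map fun q => q.1 + q.2.2 q.2.1

/-- Good states. -/
def Good (p : Ultrafilter ℕ) (Q : List ℕ → Prop) (T : Finset (ℕ → ℕ)) (s : St) : Prop :=
  Star p Q (St.val s) ∧ ∀ q ∈ s, q.2.2 ∈ T

/-- One move on states. -/
inductive Next (T : Finset (ℕ → ℕ)) (a y : ℕ) : St → St → Prop
  | push (P : ℕ → ℕ) (s : St) : P ∈ T → Next T a y s ((a, y, P) :: s)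
  | extend (b x : ℕ) (P : ℕ → ℕ) (s : St) : Next T a y ((b, x, P) :: s) ((b + a, x + y, P) :: s)

open Classical in
/-- One move on states, as a finite set. -/
noncomputable def nexts (T : Finset (ℕ → ℕ)) (a y : ℕ) : St → Finset St
  | [] => T.image fun P => [(a, y, P)]
  | (b, x, P) :: s => insert ((b + a, x + y, P) :: s)
      (T.image fun P' => (a, y, P') :: (b, x, P) :: s)

lemma mem_nexts (T : Finset (ℕ → ℕ)) (a y : ℕ) (s s' : St) :
    s' ∈ nexts T a y s ↔ Next T a y s s' := by
  constructor
  · intro h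
    rcases s with _ | ⟨⟨b, x, P⟩, s⟩
    · simp only [nexts, Finset.mem_image] at h
      obtain ⟨P, hP, rfl⟩ := h
      exact Next.push P _ hP
    · simp only [nexts, Finset.mem_insert, Finset.mem_image] at h
      rcases h with rfl | ⟨P, hP, rfl⟩
      · exact Next.extend _ _ _ _
      · exact Next.push P _ hP
  · rintro (⟨P, s, hP⟩ | ⟨b, x, P, s⟩)
    · rcases s with _ | ⟨⟨b, x, P⟩, s⟩
      · simpa [nexts] using hP
      · simpa [nexts] using hP
    · simp [nexts]

section Build
variable (p : Ultrafilter ℕ) (Q : List ℕ → Prop) (T : Finset (ℕ → ℕ))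

lemma state_step (hp : IsMinimalIdempotent p) (hQ : ∀ L, Q L → ∀ᶠ x in p, Q (x :: L))
    (hT : ∀ P ∈ T, IsPolyZeroConst P) (S : Finset St) (F : Finset (ℕ → ℕ)) (n : ℕ) :
    ∃ (a : ℕ) (H : Finset ℕ), H.Nonempty ∧ (∀ t ∈ H, n ≤ t) ∧
      ((∀ s ∈ S, Good p Q T s) → ∀ f ∈ F, ∀ s ∈ S, ∀ s', Next T a (∑ t ∈ H, f t) s s' →
        Good p Q T s') := by
  classical
  by_cases hS : ∀ s ∈ S, Good p Q T s
  swap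
  · exact ⟨0, {n}, by simp, by simp, fun h => absurd h hS⟩
  -- conditions to be met
  have hsh : ∀ P : ℕ → ℕ, ∀ x : ℕ, ∃ P' : ℕ → ℕ, IsPolyZeroConst P' ∧
      (P ∈ T → ∀ y, P (x + y) = P x + P' y) := by
    intro P x
    by_cases hP : P ∈ T
    · obtain ⟨P', h1, h2⟩ := (hT P hP).shift x
      exact ⟨P', h1, fun _ => h2⟩
    · exact ⟨fun _ => 0, ⟨0, by simp, by simp⟩, fun h => absurd h hP⟩
  choose D hD1 hD2 using hsh
  let pol : St → (ℕ → ℕ) := fun s => match s with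
    | [] => fun _ => 0
    | (_, x, P) :: _ => D P x
  let ext : St → ℕ → Prop := fun s z => match s with
    | [] => True
    | (b, x, P) :: s => Star p Q ((b + P x + z) :: St.val s)
  have hev : ∀ᶠ z in p, ∀ s ∈ S, Star p Q (z :: St.val s) ∧ ext s z := by
    rw [Filter.eventually_all_finset]
    intro s hs
    have hg := hS s hs
    refine (Star.push hp.1 hQ hg.1).and ?_
    rcases s with _ | ⟨⟨b, x, P⟩, s⟩
    · exact Filter.Eventually.of_forall fun _ => trivial
    · exact Star.extend hp.1 hg.1
  obtain ⟨a, H, hH, hn, hA⟩ := one_step p hp _ hev (T ∪ S.image pol) F (by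
    intro P hP
    rcases Finset.mem_union.1 hP with hP | hP
    · exact hT P hP
    · obtain ⟨s, -, rfl⟩ := Finset.mem_image.1 hP
      rcases s with _ | ⟨⟨b, x, P⟩, s⟩
      · exact ⟨0, by simp, by simp [pol]⟩
      · exact hD1 P x) n
  refine ⟨a, H, hH, hn, fun _ f hf s hs s' hs' => ?_⟩
  have hg := hS s hs
  rcases hs' with ⟨P, s, hP⟩ | ⟨b, x, P, s⟩
  · refine ⟨(hA P (Finset.mem_union_left _ hP) f hf s hs).1, ?_⟩
    intro q hq
    rcases List.mem_cons.1 hq with rfl | hq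
    · exact hP
    · exact hg.2 q hq
  · have hP : P ∈ T := hg.2 (b, x, P) (by simp)
    have h1 := (hA (pol ((b, x, P) :: s))
      (Finset.mem_union_right _ (Finset.mem_image_of_mem _ hs)) f hf _ hs).2
    refine ⟨?_, ?_⟩
    · have h2 : Star p Q ((b + P x + (a + D P x (∑ t ∈ H, f t))) :: St.val s) := h1
      have h3 : St.val ((b + a, x + ∑ t ∈ H, f t, P) :: s) =
          (b + P x + (a + D P x (∑ t ∈ H, f t))) :: St.val s := by
        simp only [St.val, List.map_cons, hD2 P x hP]
        congr 1
        ring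
      rw [h3]
      exact h2
    · intro q hq
      rcases List.mem_cons.1 hq with rfl | hq
      · exact hP
      · exact hg.2 q (List.mem_cons_of_mem _ hq)

open Classical in
theorem build (hp : IsMinimalIdempotent p) (hQ0 : Q []) (hQ : ∀ L, Q L → ∀ᶠ x in p, Q (x :: L))
    (hT : ∀ P ∈ T, IsPolyZeroConst P) :
    ∃ (α : Finset (ℕ → ℕ) → ℕ) (H : Finset (ℕ → ℕ) → Finset ℕ)
      (S Re : Finset (ℕ → ℕ) → Set St),
      (∀ F, (H F).Nonempty) ∧
      (∀ F G, F ⊂ G → ∀ x ∈ H F, ∀ y ∈ H G, x < y) ∧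
      (∀ F, [] ∈ S F) ∧ (∀ F G, F ⊂ G → Re F ⊆ S G) ∧ (∀ F, S F ⊆ Re F) ∧
      (∀ F, ∀ f ∈ F, ∀ s ∈ S F, ∀ s', Next T (α F) (∑ t ∈ H F, f t) s s' → s' ∈ Re F) ∧
      (∀ F, ∀ s ∈ Re F, Good p Q T s) := by
  choose a0 H0 hne hge hgood using state_step p Q T hp hQ hT
  let X := Finset (ℕ → ℕ)
  let Dt := ℕ × Finset ℕ × Finset St
  let S0 : (F : X) → ((G : X) → G ⊂ F → Dt) → Finset St := fun F rec =>
    insert [] (F.ssubsets.attach.biUnion fun G => (rec G.1 (Finset.mem_ssubsets.1 G.2)).2.2)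
  let n0 : (F : X) → ((G : X) → G ⊂ F → Dt) → ℕ := fun F rec =>
    (F.ssubsets.attach.biUnion fun G => (rec G.1 (Finset.mem_ssubsets.1 G.2)).2.1).sup id + 1
  let body : (F : X) → ((G : X) → G ⊂ F → Dt) → Dt := fun F rec =>
    (a0 (S0 F rec) F (n0 F rec), H0 (S0 F rec) F (n0 F rec),
      S0 F rec ∪ F.biUnion fun f => (S0 F rec).biUnion fun s =>
        nexts T (a0 (S0 F rec) F (n0 F rec)) (∑ t ∈ H0 (S0 F rec) F (n0 F rec), f t) s)
  have wf : WellFounded (fun G F : X => G ⊂ F) := wellFounded_lt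
  let Φ : X → Dt := wf.fix body
  have hΦ : ∀ F, Φ F = body F (fun G _ => Φ G) := fun F => wf.fix_eq body F
  let S : X → Finset St := fun F => S0 F (fun G _ => Φ G)
  let n : X → ℕ := fun F => n0 F (fun G _ => Φ G)
  have hα : ∀ F, (Φ F).1 = a0 (S F) F (n F) := fun F => by rw [hΦ F]
  have hH : ∀ F, (Φ F).2.1 = H0 (S F) F (n F) := fun F => by rw [hΦ F]
  have hR : ∀ F, (Φ F).2.2 = S F ∪ F.biUnion fun f => (S F).biUnion fun s =>
        nexts T (Φ F).1 (∑ t ∈ (Φ F).2.1, f t) s := fun F => by rw [hα, hH, hΦ F]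
  have hRS : ∀ F G, F ⊂ G → (Φ F).2.2 ⊆ S G := by
    intro F G hFG s hs
    refine Finset.mem_insert_of_mem (Finset.mem_biUnion.2 ⟨⟨F, Finset.mem_ssubsets.2 hFG⟩, ?_, hs⟩)
    simp
  refine ⟨fun F => (Φ F).1, fun F => (Φ F).2.1, fun F => S F, fun F => (Φ F).2.2,
    ?_, ?_, ?_, ?_, ?_, ?_, ?_⟩
  · intro F
    simp only [hH]
    exact hne _ _ _
  · intro F G hFG x hx y hy
    have h1 : x ≤ (G.ssubsets.attach.biUnion fun G => (Φ G.1).2.1).sup id :=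
      Finset.le_sup (f := id)
        (Finset.mem_biUnion.2 ⟨⟨F, Finset.mem_ssubsets.2 hFG⟩, by simp, hx⟩)
    have h2 : n G ≤ y := by
      simp only [hH] at hy
      exact hge _ _ _ y hy
    exact Nat.lt_of_lt_of_le (Nat.lt_succ_of_le h1) h2
  · intro F
    exact Finset.mem_insert_self _ _
  · intro F G hFG
    exact_mod_cast hRS F G hFG
  · intro F s hs
    simp only [hR F]
    exact Finset.mem_union_left _ hs
  · intro F f hf s hs s' hs'
    have : s' ∈ (Φ F).2.2 := by
      rw [hR F]
      refine Finset.mem_union_right _ (Finset.mem_biUnion.2 ⟨f, hf, Finset.mem_biUnion.2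
        ⟨s, hs, ?_⟩⟩)
      rw [mem_nexts]
      exact hs'
    exact this
  · intro F
    induction F using wf.induction with
    | _ F ih =>
    have hSg : ∀ s ∈ S F, Good p Q T s := by
      intro s hs
      rcases Finset.mem_insert.1 hs with rfl | hs
      · exact ⟨hQ0, by simp⟩
      · obtain ⟨G, -, hG⟩ := Finset.mem_biUnion.1 hs
        exact ih G.1 (Finset.mem_ssubsets.1 G.2) s hG
    intro s hs
    have hs' : s ∈ (Φ F).2.2 := hs
    rw [hR F, Finset.mem_union] at hs'
    rcases hs' with hs' | hs'
    · exact hSg s hs'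
    · obtain ⟨f, hf, h2⟩ := Finset.mem_biUnion.1 hs'
      obtain ⟨s1, hs1, h3⟩ := Finset.mem_biUnion.1 h2
      rw [mem_nexts, hα, hH] at h3
      exact hgood (S F) F (n F) hSg f hf s1 hs1 s h3

end Build

/-- The state attached to a list of blocks along a chain. -/
def blockSt (al : ℕ → ℕ) (y : ℕ → ℕ) (b : Finset ℕ × (ℕ → ℕ)) : ℕ × ℕ × (ℕ → ℕ) :=
  (∑ i ∈ b.1, al i, ∑ i ∈ b.1, y i, b.2)

lemma chain_states (T : Finset (ℕ → ℕ)) (al y : ℕ → ℕ) (S Re : ℕ → Set St)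
    (h0 : [] ∈ S 0) (hRS : ∀ i, Re i ⊆ S (i + 1)) (hSR : ∀ i, S i ⊆ Re i)
    (hnext : ∀ i, ∀ s ∈ S i, ∀ s', Next T (al i) (y i) s s' → s' ∈ Re i) :
    ∀ (N : ℕ) (bs : List (Finset ℕ × (ℕ → ℕ))), (∀ b ∈ bs, b.1.Nonempty ∧ b.2 ∈ T) →
      bs.Pairwise (fun b b' => ∀ i ∈ b.1, ∀ j ∈ b'.1, j < i) →
      (∀ b ∈ bs, ∀ i ∈ b.1, i < N) → bs.map (blockSt al y) ∈ S N := by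
  intro N
  induction N with
  | zero =>
    intro bs h1 _ h3
    rcases bs with _ | ⟨b, bs⟩
    · exact h0
    · obtain ⟨i, hi⟩ := (h1 b (by simp)).1
      exact absurd (h3 b (by simp) i hi) (by omega)
  | succ N ih =>
    intro bs h1 h2 h3
    apply hRS
    rcases bs with _ | ⟨⟨β, P⟩, bs⟩
    · exact hSR _ (ih [] (by simp) (by simp) (by simp))
    rw [List.pairwise_cons] at h2
    obtain ⟨h2a, h2b⟩ := h2
    have hβ := h1 (β, P) (by simp)
    have hrest : ∀ b ∈ bs, ∀ i ∈ b.1, i < N := by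
      intro b hb i hi
      obtain ⟨j, hj⟩ := hβ.1
      have := h2a b hb j hj i hi
      have := h3 (β, P) (by simp) j hj
      omega
    have h1' : ∀ b ∈ bs, b.1.Nonempty ∧ b.2 ∈ T := fun b hb => h1 b (by simp [hb])
    by_cases hN : N ∈ β
    · have hsum : ∀ z : ℕ → ℕ, ∑ i ∈ β, z i = ∑ i ∈ β.erase N, z i + z N := fun z =>
        (Finset.sum_erase_add β z hN).symm
      by_cases hne : (β.erase N).Nonempty
      · have := ih ((β.erase N, P) :: bs) (by
          intro b hb
          rcases List.mem_cons.1 hb with rfl | hb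
          · exact ⟨hne, hβ.2⟩
          · exact h1' b hb) (by
          rw [List.pairwise_cons]
          exact ⟨fun b hb i hi j hj => h2a b hb i (Finset.mem_of_mem_erase hi) j hj, h2b⟩) (by
          intro b hb i hi
          rcases List.mem_cons.1 hb with rfl | hb
          · have h4 := h3 (β, P) (by simp) i (Finset.mem_of_mem_erase hi)
            have h5 := Finset.ne_of_mem_erase hi
            omega
          · exact hrest b hb i hi)
        refine hnext N _ this _ ?_
        simp only [List.map_cons, blockSt, hsum]
        exact Next.extend _ _ _ _
      · rw [Finset.not_nonempty_iff_eq_empty] at hne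
        have := ih bs h1' h2b hrest
        refine hnext N _ this _ ?_
        simp only [List.map_cons, blockSt, hsum, hne, Finset.sum_empty, zero_add]
        exact Next.push _ _ hβ.2
    · refine hSR _ (ih _ h1 (List.pairwise_cons.2 ⟨h2a, h2b⟩) ?_)
      intro b hb i hi
      rcases List.mem_cons.1 hb with rfl | hb
      · have h4 := h3 (β, P) (by simp) i hi
        have h5 : i ≠ N := fun h => hN (h ▸ hi)
        omega
      · exact hrest b hb i hi

/-- Multidimensional Stronger Polynomial Central Sets Theorem I (infinitary form). -/
theorem multidimensional_stronger_polynomial_CST_I_infinitary (m : ℕ) (hm : 1 ≤ m)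
    (p : Ultrafilter ℕ) (hp : IsMinimalIdempotent p)
    (A : Set (Fin m → ℕ)) (hA : A ∈ tensor m fun _ => p)
    (T : Finset (ℕ → ℕ)) (hT : T.Nonempty) (hTP : ∀ P ∈ T, IsPolyZeroConst P) :
    ∃ (α : Finset (ℕ → ℕ) → ℕ) (H : Finset (ℕ → ℕ) → Finset ℕ),
      (∀ F : Finset (ℕ → ℕ), F.Nonempty → (H F).Nonempty) ∧
      (∀ F G : Finset (ℕ → ℕ), F.Nonempty → F ⊂ G →
        ∀ x ∈ H F, ∀ y ∈ H G, x < y) ∧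
      (∀ G : ℕ → Finset (ℕ → ℕ),
        (∀ i, (G i).Nonempty) → (∀ i j, i < j → G i ⊂ G j) →
        ∀ f : ℕ → ℕ → ℕ, (∀ i, f i ∈ G i) →
        ∀ β : Fin m → Finset ℕ,
          (∀ l, (β l).Nonempty) →
          (∀ l l' : Fin m, l < l' → ∀ x ∈ β l, ∀ y ∈ β l', x < y) →
          ∀ P : Fin m → ℕ → ℕ, (∀ l, P l ∈ T) →
          (fun l => (∑ i ∈ β l, α (G i)) +
              P l (∑ i ∈ β l, ∑ t ∈ H (G i), f i t)) ∈ A) := by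
  classical
  obtain ⟨α, H, S, Re, hne, hlt, hnil, hRS, hSR, hnext, hgood⟩ := build p
    (fun L => Pref p m A L.reverse) T hp (by simpa [Pref] using hA)
    (fun L hL => by
      filter_upwards [Pref.push p m A L.reverse hL] with x hx
      simpa using hx) hTP
  refine ⟨α, H, fun F _ => hne F, fun F G _ h => hlt F G h, ?_⟩
  intro G _ hG f hf β hβ hββ P hP
  let bs : List (Finset ℕ × (ℕ → ℕ)) := (List.ofFn fun l => (β l, P l)).reverse
  have hmem : ∀ b ∈ bs, ∃ l, (β l, P l) = b := by
    intro b hb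
    simpa [bs, List.mem_ofFn] using hb
  let N := (Finset.univ.biUnion β).sup id + 1
  have key := chain_states T (fun i => α (G i)) (fun i => ∑ t ∈ H (G i), f i t)
    (fun i => S (G i)) (fun i => Re (G i)) (hnil _) (fun i => hRS _ _ (hG _ _ (by omega)))
    (fun i => hSR _) (fun i s hs s' hs' => hnext _ _ (hf i) s hs s' hs') N bs (by
      intro b hb
      obtain ⟨l, rfl⟩ := hmem b hb
      exact ⟨hβ l, hP l⟩) (by
      simp only [bs]
      rw [List.pairwise_reverse, List.pairwise_ofFn]
      intro l l' hll i hi j hj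
      exact hββ l l' hll j hj i hi) (by
      intro b hb i hi
      obtain ⟨l, rfl⟩ := hmem b hb
      exact Nat.lt_succ_of_le (Finset.le_sup (f := id)
        (Finset.mem_biUnion.2 ⟨l, Finset.mem_univ _, hi⟩)))
  have hst := (hgood _ _ (hSR _ key)).1.base
  apply Pref.ofFn p m A
  convert hst using 1
  simp only [bs, St.val, List.map_reverse, List.reverse_reverse, List.map_ofFn]
  rfl

end MultiCST
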